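/- Progress for the EDA cast calculus: if M is a closed well-typed term, M : ∅ ⊢ A, then either (1) M ⟶ M' for some M', or (2) M is a value, or (3) M ≡ blame ℓ for some blame label ℓ. -/

import Mathlib

/-!
Progress holds by structural induction on the closed term `M`. If the subterm in evaluation
position steps or is `blame`, so does `M`, by congruence under the corresponding frame. Otherwise
that subterm is a value, and its shape is dictated by its type. An inert EDA cast always has target
`?`, so a value of base, function, pair or sum type is never a wrapped value; it is a constant,
a λ-abstraction, a pair or an injection, and the matching β- or δ-rule fires
(`EDAValue.app_steps`, `EDAValue.ite_steps`, `EDAValue.fst_steps`, `EDAValue.snd_steps`,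
`EDAValue.case_steps`). For the same reason a value of type `?` is an injection `V⟨A ⇒ ?⟩`, so a
projection applied to it either succeeds or blames, according to whether the two types are
consistent. Inversion on the consistency proof then shows that every cast applied to a value
steps or is inert (`EDAValue.cast_progress`).
-/

set_option maxHeartbeats 1000000

abbrev Label : Type := ℕ

inductive BaseTy : Type
  | nat | bool | int | unit | bot
deriving DecidableEq

inductive GType : Type
  | base (b : BaseTy)
  | unk
  | arr (A B : GType)
  | prod (A B : GType)
  | sum (A B : GType)
deriving DecidableEq

inductive Atomic : GType → Prop
  | base (b : BaseTy) : Atomic (.base b)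
  | unk : Atomic .unk

inductive TyPrec : GType → GType → Prop
  | unk (A : GType) : TyPrec .unk A
  | base (b : BaseTy) : TyPrec (.base b) (.base b)
  | arr : TyPrec A A' → TyPrec B B' → TyPrec (.arr A B) (.arr A' B')
  | prod : TyPrec A A' → TyPrec B B' → TyPrec (.prod A B) (.prod A' B')
  | sum : TyPrec A A' → TyPrec B B' → TyPrec (.sum A B) (.sum A' B')

inductive CtxPrec : List GType → List GType → Prop
  | nil : CtxPrec [] []
  | cons : TyPrec A A' → CtxPrec Γ Γ' → CtxPrec (A :: Γ) (A' :: Γ')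

inductive Consis : GType → GType → Type
  | unkR (A : GType) : Consis A .unk
  | unkL (B : GType) : Consis .unk B
  | base (b : BaseTy) : Consis (.base b) (.base b)
  | arr : Consis A' A → Consis B B' → Consis (.arr A B) (.arr A' B')
  | prod : Consis A A' → Consis B B' → Consis (.prod A B) (.prod A' B')
  | sum : Consis A A' → Consis B B' → Consis (.sum A B) (.sum A' B')

def Consis.join : ∀ {A B : GType}, Consis A B → GType
  | _, _, .unkR A => A
  | _, _, .unkL B => B
  | _, _, .base b => .base b
  | _, _, .arr c d => .arr c.join d.join
  | _, _, .prod c d => .prod c.join d.join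
  | _, _, .sum c d => .sum c.join d.join

def Consis.refl : (A : GType) → Consis A A
  | .unk => .unkR .unk
  | .base b => .base b
  | .arr A B => .arr (Consis.refl A) (Consis.refl B)
  | .prod A B => .prod (Consis.refl A) (Consis.refl B)
  | .sum A B => .sum (Consis.refl A) (Consis.refl B)

def Consis.symm : ∀ {A B : GType}, Consis A B → Consis B A
  | _, _, .unkR A => .unkL A
  | _, _, .unkL B => .unkR B
  | _, _, .base b => .base b
  | _, _, .arr c d => .arr c.symm d.symm
  | _, _, .prod c d => .prod c.symm d.symm
  | _, _, .sum c d => .sum c.symm d.symm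

mutual
def Consis.joinL : ∀ {A B : GType}, (c : Consis A B) → Consis A c.join
  | _, _, .unkR A => Consis.refl A
  | _, _, .unkL B => .unkL B
  | _, _, .base b => .base b
  | _, _, .arr c d => .arr (Consis.joinR c).symm (Consis.joinL d)
  | _, _, .prod c d => .prod (Consis.joinL c) (Consis.joinL d)
  | _, _, .sum c d => .sum (Consis.joinL c) (Consis.joinL d)

def Consis.joinR : ∀ {A B : GType}, (c : Consis A B) → Consis B c.join
  | _, _, .unkR A => .unkL A
  | _, _, .unkL B => Consis.refl B
  | _, _, .base b => .base b
  | _, _, .arr c d => .arr (Consis.joinL c).symm (Consis.joinR d)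
  | _, _, .prod c d => .prod (Consis.joinR c) (Consis.joinR d)
  | _, _, .sum c d => .sum (Consis.joinR c) (Consis.joinR d)
end

inductive GVar : List GType → GType → Type
  | z : GVar (A :: Γ) A
  | s : GVar Γ A → GVar (B :: Γ) A

def GVar.idx : ∀ {Γ A}, GVar Γ A → ℕ
  | _, _, .z => 0
  | _, _, .s x => x.idx + 1

inductive Prim : GType → Type
  | base (b : BaseTy) : Prim (.base b)
  | fn (b : BaseTy) {A : GType} : Prim A → Prim (.arr (.base b) A)

def BaseTy.rep : BaseTy → Type
  | .nat => ℕ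
  | .bool => Bool
  | .int => ℤ
  | .unit => Unit
  | .bot => Empty

def Prim.rep : ∀ {A : GType}, Prim A → Type
  | _, .base b => b.rep
  | _, .fn b p => b.rep → p.rep

def Consis.domArr : ∀ {A B C D : GType}, Consis (.arr A B) (.arr C D) → Consis C A
  | _, _, _, _, .arr c _ => c
def Consis.codArr : ∀ {A B C D : GType}, Consis (.arr A B) (.arr C D) → Consis B D
  | _, _, _, _, .arr _ d => d
def Consis.fstP : ∀ {A B C D : GType}, Consis (.prod A B) (.prod C D) → Consis A C
  | _, _, _, _, .prod c _ => c
def Consis.sndP : ∀ {A B C D : GType}, Consis (.prod A B) (.prod C D) → Consis B D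
  | _, _, _, _, .prod _ d => d
def Consis.inlS : ∀ {A B C D : GType}, Consis (.sum A B) (.sum C D) → Consis A C
  | _, _, _, _, .sum c _ => c
def Consis.inrS : ∀ {A B C D : GType}, Consis (.sum A B) (.sum C D) → Consis B D
  | _, _, _, _, .sum _ d => d

/-- EDA casts: a source type, target type, blame label, and a consistency proof. -/
inductive EDACast : GType → GType → Type
  | mk (A B : GType) (ℓ : Label) (h : Consis A B) : EDACast A B

/-- Cross casts: casts between two function, two pair, or two sum types. -/
inductive EDACross : ∀ {A B : GType}, EDACast A B → Prop
  | arr {A B C D : GType} {ℓ h} : EDACross (.mk (.arr A B) (.arr C D) ℓ h)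
  | prod {A B C D : GType} {ℓ h} : EDACross (.mk (.prod A B) (.prod C D) ℓ h)
  | sum {A B C D : GType} {ℓ h} : EDACross (.mk (.sum A B) (.sum C D) ℓ h)

/-- EDA inert casts: injections `A ⇒ℓ ?` with `A ≠ ?`. -/
inductive EDAInert : ∀ {A B : GType}, EDACast A B → Prop
  | inj {A : GType} {ℓ h} : A ≠ .unk → EDAInert (.mk A .unk ℓ h)

/-- EDA active casts: identity casts on atomic types, projections, and cross casts. -/
inductive EDAActive : ∀ {A B : GType}, EDACast A B → Prop
  | id {a : GType} {ℓ h} : Atomic a → EDAActive (.mk a a ℓ h)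
  | proj {B : GType} {ℓ h} : B ≠ .unk → EDAActive (.mk .unk B ℓ h)
  | cross {A B : GType} {c : EDACast A B} : EDACross c → EDAActive c

/-- Renamings. -/
def Ren (Γ Δ : List GType) : Type := ∀ A : GType, GVar Γ A → GVar Δ A

def Ren.ext {Γ Δ : List GType} (ρ : Ren Γ Δ) (B : GType) : Ren (B :: Γ) (B :: Δ) :=
  fun _ x =>
    match x with
    | .z => .z
    | .s y => .s (ρ _ y)

def shiftRen {Γ : List GType} (B : GType) : Ren Γ (B :: Γ) := fun _ x => .s x

/-- Intrinsically-typed terms of the Parameterized Cast Calculus `CC(⇒)`,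
over an arbitrary family `Cast` of cast representations. -/
inductive Tm (Cast : GType → GType → Type) : List GType → GType → Type
  | const {Γ : List GType} {A : GType} (p : Prim A) (k : p.rep) : Tm Cast Γ A
  | var {Γ A} (x : GVar Γ A) : Tm Cast Γ A
  | lam {Γ A B} (N : Tm Cast (A :: Γ) B) : Tm Cast Γ (.arr A B)
  | app {Γ A B} (L : Tm Cast Γ (.arr A B)) (M : Tm Cast Γ A) : Tm Cast Γ B
  | ite {Γ A} (L : Tm Cast Γ (.base .bool)) (M N : Tm Cast Γ A) : Tm Cast Γ A
  | cons {Γ A B} (M : Tm Cast Γ A) (N : Tm Cast Γ B) : Tm Cast Γ (.prod A B)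
  | fst {Γ A B} (M : Tm Cast Γ (.prod A B)) : Tm Cast Γ A
  | snd {Γ A B} (M : Tm Cast Γ (.prod A B)) : Tm Cast Γ B
  | inl {Γ A} (B : GType) (M : Tm Cast Γ A) : Tm Cast Γ (.sum A B)
  | inr {Γ B} (A : GType) (M : Tm Cast Γ B) : Tm Cast Γ (.sum A B)
  | case {Γ A B C} (L : Tm Cast Γ (.sum A B))
      (M : Tm Cast Γ (.arr A C)) (N : Tm Cast Γ (.arr B C)) : Tm Cast Γ C
  | cast {Γ A B} (M : Tm Cast Γ A) (c : Cast A B) : Tm Cast Γ B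
  | blame {Γ} (A : GType) (ℓ : Label) : Tm Cast Γ A

def Tm.rename {Cast} : ∀ {Γ Δ : List GType} {A : GType}, Ren Γ Δ → Tm Cast Γ A → Tm Cast Δ A
  | _, _, _, _, .const p k => .const p k
  | _, _, _, ρ, .var x => .var (ρ _ x)
  | _, _, _, ρ, .lam N => .lam (N.rename (ρ.ext _))
  | _, _, _, ρ, .app L M => .app (L.rename ρ) (M.rename ρ)
  | _, _, _, ρ, .ite L M N => .ite (L.rename ρ) (M.rename ρ) (N.rename ρ)
  | _, _, _, ρ, .cons M N => .cons (M.rename ρ) (N.rename ρ)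
  | _, _, _, ρ, .fst M => .fst (M.rename ρ)
  | _, _, _, ρ, .snd M => .snd (M.rename ρ)
  | _, _, _, ρ, .inl B M => .inl B (M.rename ρ)
  | _, _, _, ρ, .inr A M => .inr A (M.rename ρ)
  | _, _, _, ρ, .case L M N => .case (L.rename ρ) (M.rename ρ) (N.rename ρ)
  | _, _, _, ρ, .cast M c => .cast (M.rename ρ) c
  | _, _, _, _, .blame A ℓ => .blame A ℓ

/-- Substitutions. -/
def Subst (Cast : GType → GType → Type) (Γ Δ : List GType) : Type :=
  ∀ A : GType, GVar Γ A → Tm Cast Δ A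

def Subst.exts {Cast} {Γ Δ : List GType} (σ : Subst Cast Γ Δ) (B : GType) :
    Subst Cast (B :: Γ) (B :: Δ) :=
  fun _ x =>
    match x with
    | .z => .var .z
    | .s y => (σ _ y).rename (shiftRen B)

def Tm.subst {Cast} : ∀ {Γ Δ : List GType} {A : GType}, Subst Cast Γ Δ → Tm Cast Γ A → Tm Cast Δ A
  | _, _, _, _, .const p k => .const p k
  | _, _, _, σ, .var x => σ _ x
  | _, _, _, σ, .lam N => .lam (N.subst (σ.exts _))
  | _, _, _, σ, .app L M => .app (L.subst σ) (M.subst σ)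
  | _, _, _, σ, .ite L M N => .ite (L.subst σ) (M.subst σ) (N.subst σ)
  | _, _, _, σ, .cons M N => .cons (M.subst σ) (N.subst σ)
  | _, _, _, σ, .fst M => .fst (M.subst σ)
  | _, _, _, σ, .snd M => .snd (M.subst σ)
  | _, _, _, σ, .inl B M => .inl B (M.subst σ)
  | _, _, _, σ, .inr A M => .inr A (M.subst σ)
  | _, _, _, σ, .case L M N => .case (L.subst σ) (M.subst σ) (N.subst σ)
  | _, _, _, σ, .cast M c => .cast (M.subst σ) c
  | _, _, _, _, .blame A ℓ => .blame A ℓ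

def substZero {Cast} {Γ : List GType} {B : GType} (N : Tm Cast Γ B) : Subst Cast (B :: Γ) Γ :=
  fun _ x =>
    match x with
    | .z => N
    | .s y => .var y

/-- `M [ N ]`. -/
def Tm.subst1 {Cast} {Γ : List GType} {A B : GType}
    (M : Tm Cast (B :: Γ) A) (N : Tm Cast Γ B) : Tm Cast Γ A :=
  M.subst (substZero N)

/-- Evaluation frames (single evaluation contexts) for `CC(⇒)`, relative to a
notion of value `Val`. -/
inductive Frame (Cast : GType → GType → Type)
    (Val : ∀ {Γ : List GType} {A : GType}, Tm Cast Γ A → Prop)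
    (Γ : List GType) : GType → GType → Type
  | appL {A B} (M : Tm Cast Γ A) : Frame Cast Val Γ (.arr A B) B
  | appR {A B} (L : Tm Cast Γ (.arr A B)) (h : Val L) : Frame Cast Val Γ A B
  | ite {A} (M N : Tm Cast Γ A) : Frame Cast Val Γ (.base .bool) A
  | consR {A B} (M : Tm Cast Γ A) (h : Val M) : Frame Cast Val Γ B (.prod A B)
  | consL {A B} (N : Tm Cast Γ B) : Frame Cast Val Γ A (.prod A B)
  | fst {A B} : Frame Cast Val Γ (.prod A B) A
  | snd {A B} : Frame Cast Val Γ (.prod A B) B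
  | inl {A} (B : GType) : Frame Cast Val Γ A (.sum A B)
  | inr {B} (A : GType) : Frame Cast Val Γ B (.sum A B)
  | case {A B C} (M : Tm Cast Γ (.arr A C)) (N : Tm Cast Γ (.arr B C)) :
      Frame Cast Val Γ (.sum A B) C
  | cast {A B} (c : Cast A B) : Frame Cast Val Γ A B

def plug {Cast Val} {Γ : List GType} {A B : GType} :
    Tm Cast Γ A → Frame Cast Val Γ A B → Tm Cast Γ B
  | M, .appL N => .app M N
  | M, .appR L _ => .app L M
  | M, .ite M₁ N₁ => .ite M M₁ N₁
  | M, .consR M₁ _ => .cons M₁ M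
  | M, .consL N => .cons M N
  | M, .fst => .fst M
  | M, .snd => .snd M
  | M, .inl B => .inl B M
  | M, .inr A => .inr A M
  | M, .case M₁ N₁ => .case M M₁ N₁
  | M, .cast c => .cast M c

/-- Values of the EDA instance of `CC(⇒)`. -/
inductive EDAValue : ∀ {Γ : List GType} {A : GType}, Tm EDACast Γ A → Prop
  | lam {Γ A B} {N : Tm EDACast (A :: Γ) B} : EDAValue (.lam N)
  | const {Γ A} {p : Prim A} {k : p.rep} : EDAValue (.const (Γ := Γ) p k)
  | pair {Γ A B} {M : Tm EDACast Γ A} {N : Tm EDACast Γ B} :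
      EDAValue M → EDAValue N → EDAValue (.cons M N)
  | inl {Γ A B} {M : Tm EDACast Γ A} : EDAValue M → EDAValue (.inl (Γ := Γ) B M)
  | inr {Γ A B} {M : Tm EDACast Γ B} : EDAValue M → EDAValue (.inr (Γ := Γ) A M)
  | cast {Γ A B} {M : Tm EDACast Γ A} {c : EDACast A B} :
      EDAValue M → EDAInert c → EDAValue (.cast M c)

/-- Reduction for the EDA cast calculus: the reduction relation of the
Parameterized Cast Calculus `CC(⇒)` instantiated with EDA's cast structure
(with `applyCast` for active casts spelled out rule by rule). -/
inductive EDARed : ∀ {Γ : List GType} {A : GType}, Tm EDACast Γ A → Tm EDACast Γ A → Prop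
  -- congruence rules
  | xi {Γ A B} {M M' : Tm EDACast Γ A} (F : Frame EDACast @EDAValue Γ A B) :
      EDARed M M' → EDARed (plug M F) (plug M' F)
  | xiBlame {Γ A B} (F : Frame EDACast @EDAValue Γ A B) (ℓ : Label) :
      EDARed (plug (.blame A ℓ) F) (.blame B ℓ)
  -- applyCast, for the EDA active casts
  | castId {Γ a ℓ} (h : Consis a a) {V : Tm EDACast Γ a} :
      EDAValue V → Atomic a → EDARed (.cast V (.mk a a ℓ h)) V
  | castProjOk {Γ A B ℓ₁ ℓ₂} (h₁ : Consis A .unk) (h₂ : Consis .unk B) (hc : Consis A B)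
      {V : Tm EDACast Γ A} : EDAValue V → A ≠ .unk → B ≠ .unk →
      EDARed (.cast (.cast V (.mk A .unk ℓ₁ h₁)) (.mk .unk B ℓ₂ h₂))
             (.cast V (.mk A B ℓ₂ hc))
  | castProjFail {Γ A B ℓ₁ ℓ₂} (h₁ : Consis A .unk) (h₂ : Consis .unk B)
      {V : Tm EDACast Γ A} : EDAValue V → A ≠ .unk → B ≠ .unk →
      ¬ Nonempty (Consis A B) →
      EDARed (.cast (.cast V (.mk A .unk ℓ₁ h₁)) (.mk .unk B ℓ₂ h₂)) (.blame B ℓ₂)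
  | castFun {Γ A B C D ℓ} (h : Consis (.arr A B) (.arr C D)) {V : Tm EDACast Γ (.arr A B)} :
      EDAValue V →
      EDARed (.cast V (.mk _ _ ℓ h))
        (.lam (.cast (.app (V.rename (shiftRen C)) (.cast (.var .z) (.mk C A ℓ h.domArr)))
               (.mk B D ℓ h.codArr)))
  | castPair {Γ A B C D ℓ} (h : Consis (.prod A B) (.prod C D)) {V : Tm EDACast Γ (.prod A B)} :
      EDAValue V →
      EDARed (.cast V (.mk _ _ ℓ h))
        (.cons (.cast (.fst V) (.mk A C ℓ h.fstP)) (.cast (.snd V) (.mk B D ℓ h.sndP)))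
  | castSum {Γ A B C D ℓ} (h : Consis (.sum A B) (.sum C D)) {V : Tm EDACast Γ (.sum A B)} :
      EDAValue V →
      EDARed (.cast V (.mk _ _ ℓ h))
        (.case V (.lam (.inl D (.cast (.var .z) (.mk A C ℓ h.inlS))))
                 (.lam (.inr C (.cast (.var .z) (.mk B D ℓ h.inrS)))))
  -- elimination of values wrapped in inert cross casts (vacuous for EDA)
  | funCast {Γ A B C D ℓ} (h : Consis (.arr A B) (.arr C D))
      {V : Tm EDACast Γ (.arr A B)} {W : Tm EDACast Γ C} :
      EDAValue V → EDAValue W → EDAInert (.mk _ _ ℓ h) →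
      EDARed (.app (.cast V (.mk _ _ ℓ h)) W)
             (.cast (.app V (.cast W (.mk C A ℓ h.domArr))) (.mk B D ℓ h.codArr))
  | fstCast {Γ A B C D ℓ} (h : Consis (.prod A B) (.prod C D)) {V : Tm EDACast Γ (.prod A B)} :
      EDAValue V → EDAInert (.mk _ _ ℓ h) →
      EDARed (.fst (.cast V (.mk _ _ ℓ h))) (.cast (.fst V) (.mk A C ℓ h.fstP))
  | sndCast {Γ A B C D ℓ} (h : Consis (.prod A B) (.prod C D)) {V : Tm EDACast Γ (.prod A B)} :
      EDAValue V → EDAInert (.mk _ _ ℓ h) →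
      EDARed (.snd (.cast V (.mk _ _ ℓ h))) (.cast (.snd V) (.mk B D ℓ h.sndP))
  | caseCast {Γ A B C D E ℓ} (h : Consis (.sum A B) (.sum C D))
      {V : Tm EDACast Γ (.sum A B)}
      {W₁ : Tm EDACast Γ (.arr C E)} {W₂ : Tm EDACast Γ (.arr D E)} :
      EDAValue V → EDAInert (.mk _ _ ℓ h) →
      EDARed (.case (.cast V (.mk _ _ ℓ h)) W₁ W₂)
        (.case V
          (.lam (.app (W₁.rename (shiftRen A)) (.cast (.var .z) (.mk A C ℓ h.inlS))))
          (.lam (.app (W₂.rename (shiftRen B)) (.cast (.var .z) (.mk B D ℓ h.inrS)))))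
  -- the usual STLC rules
  | beta {Γ A B} {M : Tm EDACast (A :: Γ) B} {V : Tm EDACast Γ A} :
      EDAValue V → EDARed (.app (.lam M) V) (M.subst1 V)
  | delta {Γ : List GType} {b A} (p : Prim A) (f : Prim.rep (.fn b p)) (k : Prim.rep (.base b)) :
      EDARed (Γ := Γ) (.app (.const (.fn b p) f) (.const (.base b) k)) (.const p (f k))
  | ifTrue {Γ A} {M N : Tm EDACast Γ A} :
      EDARed (.ite (.const (.base .bool) true) M N) M
  | ifFalse {Γ A} {M N : Tm EDACast Γ A} :
      EDARed (.ite (.const (.base .bool) false) M N) N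
  | betaFst {Γ A B} {V : Tm EDACast Γ A} {W : Tm EDACast Γ B} :
      EDAValue V → EDAValue W → EDARed (.fst (.cons V W)) V
  | betaSnd {Γ A B} {V : Tm EDACast Γ A} {W : Tm EDACast Γ B} :
      EDAValue V → EDAValue W → EDARed (.snd (.cons V W)) W
  | caseL {Γ A B C} {V : Tm EDACast Γ A}
      {L : Tm EDACast Γ (.arr A C)} {M : Tm EDACast Γ (.arr B C)} :
      EDAValue V → EDARed (.case (.inl B V) L M) (.app L V)
  | caseR {Γ A B C} {V : Tm EDACast Γ B}
      {L : Tm EDACast Γ (.arr A C)} {M : Tm EDACast Γ (.arr B C)} :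
      EDAValue V → EDARed (.case (.inr A V) L M) (.app M V)

theorem EDAValue.app_steps {Γ : List GType} {A B : GType} {V : Tm EDACast Γ (.arr A B)}
    {W : Tm EDACast Γ A} (hV : EDAValue V) (hW : EDAValue W) : ∃ M', EDARed (.app V W) M' := by
  cases hV with
  | lam => exact ⟨_, .beta hW⟩
  | @const _ p k =>
    cases p with
    | fn b p =>
      -- primitive functions are first-order, so the argument has base type and is a constant
      cases hW with
      | @const _ q k' =>
        cases q
        exact ⟨_, .delta p k k'⟩
      | cast _ hc => cases hc
  | cast _ hc => cases hc

theorem EDAValue.ite_steps {Γ : List GType} {A : GType} {V : Tm EDACast Γ (.base .bool)}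
    (hV : EDAValue V) (M N : Tm EDACast Γ A) : ∃ M', EDARed (.ite V M N) M' := by
  cases hV with
  | @const _ p k =>
    cases p
    change Bool at k
    cases k
    · exact ⟨_, .ifFalse⟩
    · exact ⟨_, .ifTrue⟩
  | cast _ hc => cases hc

theorem EDAValue.fst_steps {Γ : List GType} {A B : GType} {V : Tm EDACast Γ (.prod A B)}
    (hV : EDAValue V) : ∃ M', EDARed (.fst V) M' := by
  cases hV with
  | @const _ p k => cases p
  | pair h₁ h₂ => exact ⟨_, .betaFst h₁ h₂⟩
  | cast _ hc => cases hc

theorem EDAValue.snd_steps {Γ : List GType} {A B : GType} {V : Tm EDACast Γ (.prod A B)}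
    (hV : EDAValue V) : ∃ M', EDARed (.snd V) M' := by
  cases hV with
  | @const _ p k => cases p
  | pair h₁ h₂ => exact ⟨_, .betaSnd h₁ h₂⟩
  | cast _ hc => cases hc

theorem EDAValue.case_steps {Γ : List GType} {A B C : GType} {V : Tm EDACast Γ (.sum A B)}
    (hV : EDAValue V) (M : Tm EDACast Γ (.arr A C)) (N : Tm EDACast Γ (.arr B C)) :
    ∃ M', EDARed (.case V M N) M' := by
  cases hV with
  | @const _ p k => cases p
  | inl h => exact ⟨_, .caseL h⟩
  | inr h => exact ⟨_, .caseR h⟩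
  | cast _ hc => cases hc

/-- A projection out of `?` fires on every value: the value is an injection from some `A`, and
the outcome depends on whether `A` is consistent with the target. -/
theorem EDAValue.proj_steps {Γ : List GType} {B : GType} {V : Tm EDACast Γ .unk}
    (hV : EDAValue V) (hB : B ≠ .unk) (ℓ : Label) (h : Consis .unk B) :
    ∃ M', EDARed (.cast V (.mk .unk B ℓ h)) M' := by
  cases hV with
  | @const _ p k => cases p
  | @cast A _ W c hW hc =>
    cases hc with
    | inj hA =>
      by_cases hAB : Nonempty (Consis A B)
      · exact ⟨_, .castProjOk _ _ hAB.some hW hA hB⟩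
      · exact ⟨_, .castProjFail _ _ hW hA hB hAB⟩

theorem EDAValue.cast_progress {Γ : List GType} {A B : GType} {V : Tm EDACast Γ A}
    (hV : EDAValue V) (c : EDACast A B) : (∃ M', EDARed (.cast V c) M') ∨ EDAInert c := by
  obtain ⟨ℓ, h⟩ := c
  cases h with
  | unkR =>
    by_cases hA : A = .unk
    · subst hA
      exact .inl ⟨_, .castId _ hV .unk⟩
    · exact .inr (.inj hA)
  | unkL =>
    by_cases hB : B = .unk
    · subst hB
      exact .inl ⟨_, .castId _ hV .unk⟩
    · exact .inl (hV.proj_steps hB ℓ _)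
  | base b => exact .inl ⟨_, .castId _ hV (.base b)⟩
  | arr => exact .inl ⟨_, .castFun _ hV⟩
  | prod => exact .inl ⟨_, .castPair _ hV⟩
  | sum => exact .inl ⟨_, .castSum _ hV⟩

/-- The conclusion of the progress theorem for `M`: it steps, is a value, or is `blame`. -/
def EDAProgress {Γ : List GType} {A : GType} (M : Tm EDACast Γ A) : Prop :=
  (∃ M', EDARed M M') ∨ EDAValue M ∨ (∃ ℓ : Label, M = .blame A ℓ)

/-- Progress of the subterm in evaluation position lifts through the frame, so only the case
where that subterm is a value needs an argument. -/
theorem EDAProgress.plug {Γ : List GType} {A B : GType} {M : Tm EDACast Γ A}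
    (hM : EDAProgress M) (F : Frame EDACast @EDAValue Γ A B)
    (hval : EDAValue M → EDAProgress (plug M F)) : EDAProgress (plug M F) := by
  rcases hM with ⟨M', h⟩ | hV | ⟨ℓ, rfl⟩
  · exact .inl ⟨_, .xi F h⟩
  · exact hval hV
  · exact .inl ⟨_, .xiBlame F ℓ⟩

/-- Progress for the EDA cast calculus (Corollary 5.7): a closed well-typed term
either steps, is a value, or is `blame ℓ`. -/
theorem eda_progress {A : GType} (M : Tm EDACast [] A) :
    (∃ M', EDARed M M') ∨ EDAValue M ∨ (∃ ℓ : Label, M = .blame A ℓ) := by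
  change EDAProgress M
  -- the induction needs a variable context, since it also passes under binders
  generalize hΓ : ([] : List GType) = Γ at M
  induction M with
  | const => exact .inr (.inl .const)
  | var x => subst hΓ; cases x
  | lam => exact .inr (.inl .lam)
  | app L M ihL ihM =>
    exact (ihL hΓ).plug (.appL M) fun hL =>
      (ihM hΓ).plug (.appR L hL) fun hM => .inl (hL.app_steps hM)
  | ite L M N ihL => exact (ihL hΓ).plug (.ite M N) fun hL => .inl (hL.ite_steps M N)
  | cons M N ihM ihN =>
    exact (ihM hΓ).plug (.consL N) fun hM =>
      (ihN hΓ).plug (.consR M hM) fun hN => .inr (.inl (.pair hM hN))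
  | fst M ih => exact (ih hΓ).plug .fst fun hM => .inl hM.fst_steps
  | snd M ih => exact (ih hΓ).plug .snd fun hM => .inl hM.snd_steps
  | inl B M ih => exact (ih hΓ).plug (.inl B) fun hM => .inr (.inl (.inl hM))
  | inr A M ih => exact (ih hΓ).plug (.inr A) fun hM => .inr (.inl (.inr hM))
  | case L M N ihL => exact (ihL hΓ).plug (.case M N) fun hL => .inl (hL.case_steps M N)
  | cast M c ih =>
    exact (ih hΓ).plug (.cast c) fun hM =>
      (hM.cast_progress c).imp id fun hc => .inl (.cast hM hc)
  | blame A ℓ => exact .inr (.inr ⟨ℓ, rfl⟩)
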